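/- Let G be a ternary semigroup satisfying condition [Z] and let D be the fan representation relation on G. Then: (1) every ideal I of G is saturated for D (i.e., a, b ∈ I and c ∈ D(a,b) imply c ∈ I), and every proper ideal of G is prime; (2) a multiplicatively closed subset S of G containing 1 is saturated for D if and only if Id(G) ⊆ S and S ∩ -S is an ideal of G. -/

import Mathlib

universe u

/-- A ternary semigroup: a commutative monoid with distinguished elements `0` (`tzero`)
and `-1` (`tneg`) satisfying `x³ = x`, `-1 ≠ 1`, `(-1)(-1) = 1`, `x·0 = 0`, and
`x = -1·x → x = 0`. -/
class TernarySemigroup (G : Type u) extends CommMonoid G where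
  tzero : G
  tneg : G
  cube : ∀ x : G, x * x * x = x
  tneg_ne_one : tneg ≠ 1
  tneg_mul_tneg : tneg * tneg = 1
  mul_tzero : ∀ x : G, x * tzero = tzero
  eq_tzero_of_eq_tneg_mul : ∀ x : G, x = tneg * x → x = tzero

open TernarySemigroup

/-- A TS-character of `G` with values in the ternary semigroup `3 = {-1,0,1}` (`SignType`). -/
def IsTSChar {G : Type u} [TernarySemigroup G] (h : G → SignType) : Prop :=
  (∀ x y : G, h (x * y) = h x * h y) ∧ h 1 = 1 ∧ h (tzero : G) = 0 ∧ h (tneg : G) = -1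

/-- Condition [Z]: the zero sets of elements are totally ordered, algebraically:
`a²b² = a²` or `a²b² = b²` for all `a, b`. -/
def CondZ (G : Type u) [TernarySemigroup G] : Prop :=
  ∀ a b : G, a * a * (b * b) = a * a ∨ a * a * (b * b) = b * b

/-- The fan representation relation on a ternary semigroup:
`fanD c a b` means `c ∈ D(a,b)`, i.e. `c ∈ a·Id(G) ∪ b·Id(G)` or (`ca = -cb` and `c = a²c`). -/
def fanD {G : Type u} [TernarySemigroup G] (c a b : G) : Prop :=
  (∃ x : G, c = a * (x * x)) ∨ (∃ x : G, c = b * (x * x)) ∨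
  (c * a = tneg * (c * b) ∧ c = a * a * c)

/-- An ideal of a ternary semigroup: a nonempty subset closed under multiplication
by arbitrary elements. -/
def TSIdeal {G : Type u} [TernarySemigroup G] (I : Set G) : Prop :=
  I.Nonempty ∧ ∀ x ∈ I, ∀ y : G, x * y ∈ I

/-! For every `x`, `xG ⊆ D(x, -x)`, so a saturated `S` contains every multiple of an element of
`S ∩ -S`. Conversely, if `ca = -cb` and `c = a²c` with `a, b ∈ S`, then `c²a = -c²b` lies in
`S ∩ -S`, and `c = (c²a)(ac)` is a multiple of it. For primality, condition [Z] makes one of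
`a²`, `b²` equal to `(ab)²`, and `x = x²x` lies in every ideal containing `x²`. -/

/-- Saturation of a subset for the fan representation relation: closure under `(a, b) ↦ D(a, b)`. -/
def IsFanSaturated {G : Type u} [TernarySemigroup G] (S : Set G) : Prop :=
  ∀ a ∈ S, ∀ b ∈ S, ∀ c : G, fanD c a b → c ∈ S

/-- The support `S ∩ -S`, whose being an ideal characterizes saturation. The set `-S` is spelled as
an image under multiplication by `tneg`; see `mem_tsSupport_iff` for the symmetric form. -/
def tsSupport {G : Type u} [TernarySemigroup G] (S : Set G) : Set G :=
  S ∩ {x : G | ∃ s ∈ S, x = tneg * s}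

section

variable {G : Type u} [TernarySemigroup G] {I S : Set G} {a b c x : G}

theorem tneg_mul_tneg_mul (x : G) : tneg * (tneg * x) = x := by
  rw [← mul_assoc, tneg_mul_tneg, one_mul]

theorem mem_tsSupport_iff : x ∈ tsSupport S ↔ x ∈ S ∧ tneg * x ∈ S := by
  refine and_congr_right fun _ => ⟨?_, fun hx => ⟨tneg * x, hx, (tneg_mul_tneg_mul x).symm⟩⟩
  rintro ⟨s, hs, rfl⟩
  rwa [tneg_mul_tneg_mul]

theorem fanD_mul_tneg_mul (x y : G) : fanD (x * y) x (tneg * x) := by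
  refine Or.inr (Or.inr ⟨?_, ?_⟩)
  · rw [mul_left_comm (x * y), tneg_mul_tneg_mul]
  · rw [← mul_assoc, cube]

theorem TSIdeal.mul_self_mem_iff (hI : TSIdeal I) : x * x ∈ I ↔ x ∈ I :=
  ⟨fun hx => cube x ▸ hI.2 _ hx x, fun hx => hI.2 x hx x⟩

theorem TSIdeal.isFanSaturated (hI : TSIdeal I) : IsFanSaturated I := by
  rintro a ha b hb c (⟨x, rfl⟩ | ⟨x, rfl⟩ | ⟨-, hc⟩)
  · exact hI.2 a ha _
  · exact hI.2 b hb _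
  · rw [hc, mul_assoc]
    exact hI.2 a ha _

theorem TSIdeal.mem_or_mem (hI : TSIdeal I) (hZ : CondZ G) (hab : a * b ∈ I) :
    a ∈ I ∨ b ∈ I := by
  have hsq : a * a * (b * b) ∈ I := by
    rw [mul_mul_mul_comm]
    exact hI.mul_self_mem_iff.2 hab
  rcases hZ a b with h | h
  · exact Or.inl (hI.mul_self_mem_iff.1 (h ▸ hsq))
  · exact Or.inr (hI.mul_self_mem_iff.1 (h ▸ hsq))

theorem IsFanSaturated.mul_self_mem (hS : IsFanSaturated S) (h1 : 1 ∈ S) (x : G) : x * x ∈ S :=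
  hS 1 h1 1 h1 _ (Or.inl ⟨x, (one_mul _).symm⟩)

theorem IsFanSaturated.mul_mem_of_mem_tsSupport (hS : IsFanSaturated S) (hx : x ∈ tsSupport S)
    (y : G) : x * y ∈ S :=
  have ⟨hpos, hneg⟩ := mem_tsSupport_iff.1 hx
  hS x hpos _ hneg _ (fanD_mul_tneg_mul x y)

theorem IsFanSaturated.tsIdeal_tsSupport (hS : IsFanSaturated S) (h1 : 1 ∈ S) :
    TSIdeal (tsSupport S) := by
  have h0 : (tzero : G) ∈ S := mul_tzero (tzero : G) ▸ hS.mul_self_mem h1 tzero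
  refine ⟨⟨tzero, mem_tsSupport_iff.2 ⟨h0, (mul_tzero (tneg : G)).symm ▸ h0⟩⟩, fun x hx y => ?_⟩
  refine mem_tsSupport_iff.2 ⟨hS.mul_mem_of_mem_tsSupport hx y, ?_⟩
  rw [mul_left_comm]
  exact hS.mul_mem_of_mem_tsSupport hx (tneg * y)

theorem mul_self_mul_mem_tsSupport (hmul : ∀ x ∈ S, ∀ y ∈ S, x * y ∈ S)
    (hsq : ∀ x : G, x * x ∈ S) (ha : a ∈ S) (hb : b ∈ S) (hab : c * a = tneg * (c * b)) :
    c * c * a ∈ tsSupport S := by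
  refine ⟨hmul _ (hsq c) a ha, c * c * b, hmul _ (hsq c) b hb, ?_⟩
  rw [mul_assoc, hab, mul_left_comm, mul_assoc]

theorem isFanSaturated_of_tsIdeal_tsSupport (hmul : ∀ x ∈ S, ∀ y ∈ S, x * y ∈ S)
    (hsq : ∀ x : G, x * x ∈ S) (hI : TSIdeal (tsSupport S)) : IsFanSaturated S := by
  rintro a ha b hb c (⟨x, rfl⟩ | ⟨x, rfl⟩ | ⟨hab, hc⟩)
  · exact hmul a ha _ (hsq x)
  · exact hmul b hb _ (hsq x)
  · have hfactor : c * c * a * (a * c) = c := calc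
      c * c * a * (a * c) = c * c * (a * a * c) := by simp only [mul_assoc]
      _ = c := by rw [← hc, cube]
    have hmem := hI.2 _ (mul_self_mul_mem_tsSupport hmul hsq ha hb hab) (a * c)
    exact hfactor ▸ hmem.1

theorem isFanSaturated_iff (h1 : 1 ∈ S) (hmul : ∀ x ∈ S, ∀ y ∈ S, x * y ∈ S) :
    IsFanSaturated S ↔ (∀ x : G, x * x ∈ S) ∧ TSIdeal (tsSupport S) :=
  ⟨fun hS => ⟨hS.mul_self_mem h1, hS.tsIdeal_tsSupport h1⟩,
    fun ⟨hsq, hI⟩ => isFanSaturated_of_tsIdeal_tsSupport hmul hsq hI⟩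

end

/-- In a ternary semigroup with condition [Z] equipped with the fan representation relation:
(1) every ideal is saturated and every proper ideal is prime; (2) a multiplicatively closed
subset `S` containing `1` is saturated iff it contains all squares and `S ∩ -S` is an ideal. -/
theorem stmt_12 {G : Type u} [TernarySemigroup G] (hZ : CondZ G) :
    (∀ I : Set G, TSIdeal I →
      (∀ a ∈ I, ∀ b ∈ I, ∀ c : G, fanD c a b → c ∈ I) ∧
      (I ≠ Set.univ → ∀ a b : G, a * b ∈ I → a ∈ I ∨ b ∈ I)) ∧
    (∀ S : Set G, (1 : G) ∈ S → (∀ x ∈ S, ∀ y ∈ S, x * y ∈ S) →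
      ((∀ a ∈ S, ∀ b ∈ S, ∀ c : G, fanD c a b → c ∈ S) ↔
        ((∀ x : G, x * x ∈ S) ∧ TSIdeal (S ∩ {x : G | ∃ s ∈ S, x = tneg * s})))) :=
  ⟨fun _ hI => ⟨hI.isFanSaturated, fun _ _ _ hab => hI.mem_or_mem hZ hab⟩,
    fun _ h1 hmul => isFanSaturated_iff h1 hmul⟩
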